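/- For a quasi-static single-antenna ISI channel with ν+1 taps, the diversity of the single-carrier MMSE receiver under zero-padded transmission equals ν+1 irrespective of the rate R: for every fixed R > 0, lim_{ρ→∞} log P_out(ρ) / log ρ = −(ν+1). -/

import Mathlib

/-!
The proof compares the outage event with two sup-norm balls in the space of taps.

Put `A = I + ρ H^* H`, so that `1 + γ_k = 1 / (A⁻¹)_kk`. The Schur-type inequality
`1 ≤ A_kk (A⁻¹)_kk` (`one_le_diag_mul`) gives `1 + γ_k ≤ A_kk = 1 + ρ ‖H e_k‖²`, and every column of
`H` has squared length at most a constant times `‖ω‖²`, where `ω` lists the real and imaginary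
parts of the taps. Conversely, zero padding makes `H` the matrix of multiplication by a polynomial,
which is injective unless all taps vanish (`chan_mulVec_ne_zero`); by compactness and homogeneity
`H^* H ≥ c ‖ω‖² I` with `c > 0` depending only on the dimensions, whence `1 + γ_k ≥ 1 + ρ c ‖ω‖²`.

Thus, up to constants, outage at rate `R` means `ρ ‖ω‖² < 2 ^ R - 1`. The `2 (ν + 1)` real
coordinates of `ω` are independent with a Gaussian density, which is bounded and bounded away from
zero near the origin, so a ball of radius `√(a / ρ)` has probability of exact order `ρ ^ (-(ν + 1))`
(`exists_matrixLaw_ball_bounds`). Taking logarithms gives the limit.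
-/

open MeasureTheory ProbabilityTheory Filter Matrix

noncomputable section

/-- Law of a single standard circularly-symmetric complex Gaussian entry, represented as
its pair (re, im) of independent `N(0, 1/2)` real Gaussians. -/
def entryLaw : Measure (ℝ × ℝ) := (gaussianReal 0 (1 / 2)).prod (gaussianReal 0 (1 / 2))

instance : IsProbabilityMeasure entryLaw := by
  unfold entryLaw; infer_instance

/-- Law of a family of i.i.d. standard complex Gaussian entries indexed by `ι`. -/
def matrixLaw (ι : Type*) [Fintype ι] : Measure (ι → ℝ × ℝ) :=
  Measure.pi fun _ => entryLaw

/-- Turn a pair of reals into a complex number. -/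
def toC (p : ℝ × ℝ) : ℂ := ⟨p.1, p.2⟩

/-- The `(L_d+ν) × L_d` zero-padded banded Toeplitz equivalent channel of a
single-antenna ISI channel with taps `h_0, …, h_ν`:
`(H_eq)_{p,q} = h_{p−q}` when `0 ≤ p−q ≤ ν` and `0` otherwise. -/
def HeqZP (ν Ld : ℕ) (h : Fin (ν + 1) → ℂ) : Matrix (Fin (Ld + ν)) (Fin Ld) ℂ :=
  Matrix.of fun p q =>
    if hpq : (q : ℕ) ≤ (p : ℕ) ∧ (p : ℕ) - (q : ℕ) ≤ ν then
      h ⟨(p : ℕ) - (q : ℕ), by omega⟩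
    else 0

/-- MMSE per-stream SINR: `γ_k(ρ) = 1 / ((I_{L_d} + ρ H_eq^* H_eq)⁻¹)_{kk} − 1`. -/
def sinrZP (ν Ld : ℕ) (ρ : ℝ) (ω : Fin (ν + 1) → ℝ × ℝ) (k : Fin Ld) : ℝ :=
  1 / ((((1 : Matrix (Fin Ld) (Fin Ld) ℂ) +
      (ρ : ℂ) • ((HeqZP ν Ld (fun n => toC (ω n)))ᴴ *
        HeqZP ν Ld (fun n => toC (ω n))))⁻¹ k k).re) - 1

/-- Outage probability of the SC-MMSE receiver under zero padding at rate `R`, SNR `ρ`: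
`P_out(ρ) = Prob((1/L_d)·∑_{k=1}^{L_d} log₂(1 + γ_k(ρ)) < R)`, where the channel taps
are i.i.d. standard complex Gaussian. -/
def PoutZP (ν Ld : ℕ) (R ρ : ℝ) : ℝ :=
  (matrixLaw (Fin (ν + 1))
    {ω | (1 / (Ld : ℝ)) * ∑ k : Fin Ld, Real.logb 2 (1 + sinrZP ν Ld ρ ω k) < R}).toReal

/-! ### Diagonal entries of the inverse -/

/-- The squared Euclidean norm of a complex vector (the norm on `n → ℂ` is the sup norm). -/
def sqNorm {n : Type*} [Fintype n] (y : n → ℂ) : ℝ := ∑ i, Complex.normSq (y i)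

lemma sqNorm_nonneg {n : Type*} [Fintype n] (y : n → ℂ) : 0 ≤ sqNorm y :=
  Finset.sum_nonneg fun _ _ => Complex.normSq_nonneg _

lemma star_dotProduct_self_eq {n : Type*} [Fintype n] (y : n → ℂ) :
    star y ⬝ᵥ y = (sqNorm y : ℂ) := by
  simp [dotProduct, sqNorm, Complex.normSq_eq_conj_mul_self]

section Inverse

variable {m n : Type*} [Fintype m] [Fintype n] [DecidableEq n]

/-- The regularised Gram matrix `I + ρ H^* H`. -/
def regGram (H : Matrix m n ℂ) (ρ : ℝ) : Matrix n n ℂ := 1 + (ρ : ℂ) • (Hᴴ * H)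

lemma regGram_quad (H : Matrix m n ℂ) (ρ : ℝ) (y : n → ℂ) :
    star y ⬝ᵥ (regGram H ρ *ᵥ y) = ((sqNorm y + ρ * sqNorm (H *ᵥ y) : ℝ) : ℂ) := by
  have h : star y ⬝ᵥ ((Hᴴ * H) *ᵥ y) = (sqNorm (H *ᵥ y) : ℂ) := by
    rw [← star_dotProduct_self_eq, ← mulVec_mulVec, dotProduct_mulVec, star_mulVec]
  rw [regGram, add_mulVec, one_mulVec, smul_mulVec, dotProduct_add, dotProduct_smul, h,
    star_dotProduct_self_eq]
  push_cast
  rfl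

open scoped ComplexOrder in
lemma regGram_isUnit_det (H : Matrix m n ℂ) {ρ : ℝ} (hρ : 0 ≤ ρ) :
    IsUnit (regGram H ρ).det := by
  rw [← isUnit_iff_isUnit_det]
  apply PosDef.isUnit
  apply PosDef.one.add_posSemidef
  exact (posSemidef_conjTranspose_mul_self H).smul (by exact_mod_cast hρ)

lemma mulVec_inv_col (H : Matrix m n ℂ) {ρ : ℝ} (hρ : 0 ≤ ρ) (k : n) :
    regGram H ρ *ᵥ (fun i => (regGram H ρ)⁻¹ i k) = Pi.single k 1 := by
  have h := mul_nonsing_inv _ (regGram_isUnit_det H hρ)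
  ext i
  have := congrFun (congrFun h i) k
  rw [mul_apply] at this
  simp only [mulVec, dotProduct, this, one_apply, Pi.single_apply]

/-- Evaluating the form of `I + ρ H^* H` at the `k`-th column of the inverse returns the `k`-th
diagonal entry of the inverse. -/
lemma quad_inv_col (H : Matrix m n ℂ) {ρ : ℝ} (hρ : 0 ≤ ρ) (k : n) :
    sqNorm (fun i => (regGram H ρ)⁻¹ i k) + ρ * sqNorm (H *ᵥ fun i => (regGram H ρ)⁻¹ i k)
      = ((regGram H ρ)⁻¹ k k).re := by
  have h := regGram_quad H ρ (fun i => (regGram H ρ)⁻¹ i k)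
  rw [mulVec_inv_col H hρ] at h
  simp only [dotProduct_single, mul_one, Pi.star_apply] at h
  have := congrArg Complex.re h
  rw [Complex.ofReal_re] at this
  rw [← this]
  simp

lemma sqNorm_single (k : n) : sqNorm (Pi.single k (1 : ℂ)) = 1 := by
  have := star_dotProduct_self_eq (Pi.single k (1 : ℂ) : n → ℂ)
  simp at this
  exact_mod_cast this.symm

/-- The Schur-type bound `1 ≤ A_kk (A⁻¹)_kk` for `A = I + ρ H^* H`, from nonnegativity of the form
of `A` at `A⁻¹ e_k - t e_k` for the optimal `t = 1 / A_kk`. -/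
lemma one_le_diag_mul (H : Matrix m n ℂ) {ρ : ℝ} (hρ : 0 ≤ ρ) (k : n) :
    1 ≤ (1 + ρ * sqNorm (fun i => H i k)) * ((regGram H ρ)⁻¹ k k).re := by
  set u : n → ℂ := fun i => (regGram H ρ)⁻¹ i k with hu
  set e : n → ℂ := Pi.single k 1 with he
  set d : ℝ := 1 + ρ * sqNorm (fun i => H i k) with hd
  have hdpos : 0 < d := by
    have := mul_nonneg hρ (sqNorm_nonneg (fun i => H i k))
    linarith
  have hherm : (regGram H ρ).IsHermitian := by
    simp [IsHermitian, regGram, conjTranspose_add, conjTranspose_smul, conjTranspose_mul]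
  have hAu : regGram H ρ *ᵥ u = e := mulVec_inv_col H hρ k
  have hee : star e ⬝ᵥ (regGram H ρ *ᵥ e) = (d : ℂ) := by
    rw [regGram_quad, he, sqNorm_single, mulVec_single_one]
    rfl
  have heu : star e ⬝ᵥ (regGram H ρ *ᵥ u) = 1 := by
    rw [hAu, star_dotProduct_self_eq, he, sqNorm_single]; simp
  have hue : star u ⬝ᵥ (regGram H ρ *ᵥ e) = 1 := by
    have h1 : star (star e ⬝ᵥ (regGram H ρ *ᵥ u)) = star u ⬝ᵥ (regGram H ρ *ᵥ e) := by
      rw [star_dotProduct, star_star, star_mulVec, hherm.eq,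
        ← dotProduct_mulVec]
    rw [← h1, heu, star_one]
  have huu : star u ⬝ᵥ (regGram H ρ *ᵥ u) = ((((regGram H ρ)⁻¹ k k).re : ℝ) : ℂ) := by
    rw [regGram_quad, ← quad_inv_col H hρ k]
  set x : ℝ := ((regGram H ρ)⁻¹ k k).re
  have key : ((sqNorm (u - (d⁻¹ : ℂ) • e) + ρ * sqNorm (H *ᵥ (u - (d⁻¹ : ℂ) • e)) : ℝ) : ℂ)
      = ((x - d⁻¹ : ℝ) : ℂ) := by
    have hdc : (d : ℂ) ≠ 0 := by exact_mod_cast hdpos.ne'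
    rw [← regGram_quad]
    simp only [mulVec_sub, mulVec_smul, star_sub, star_smul, sub_dotProduct, dotProduct_sub,
      smul_dotProduct, dotProduct_smul, hee, heu, hue, huu, smul_eq_mul]
    simp [hdc]
  have key2 := Complex.ofReal_injective key
  have h1 := sqNorm_nonneg (u - (d⁻¹ : ℂ) • e)
  have h2 := mul_nonneg hρ (sqNorm_nonneg (H *ᵥ (u - (d⁻¹ : ℂ) • e)))
  have h3 : d⁻¹ ≤ x := by linarith
  calc (1 : ℝ) = d * d⁻¹ := (mul_inv_cancel₀ hdpos.ne').symm
    _ ≤ d * x := by gcongr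

lemma inv_diag_pos (H : Matrix m n ℂ) {ρ : ℝ} (hρ : 0 ≤ ρ) (k : n) :
    0 < ((regGram H ρ)⁻¹ k k).re := by
  have h := one_le_diag_mul H hρ k
  have h1 := mul_nonneg hρ (sqNorm_nonneg (fun i => H i k))
  by_contra! hneg
  nlinarith

lemma one_div_inv_diag_le (H : Matrix m n ℂ) {ρ : ℝ} (hρ : 0 ≤ ρ) (k : n) :
    1 / ((regGram H ρ)⁻¹ k k).re ≤ 1 + ρ * sqNorm (fun i => H i k) := by
  rw [div_le_iff₀ (inv_diag_pos H hρ k)]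
  exact one_le_diag_mul H hρ k

/-- If `H^* H ≥ s I` then every diagonal entry of `(I + ρ H^* H)⁻¹` is at most `1 / (1 + ρ s)`. -/
lemma le_one_div_inv_diag (H : Matrix m n ℂ) {ρ s : ℝ} (hρ : 0 ≤ ρ) (hs : 0 ≤ s)
    (hH : ∀ y, s * sqNorm y ≤ sqNorm (H *ᵥ y)) (k : n) :
    1 + ρ * s ≤ 1 / ((regGram H ρ)⁻¹ k k).re := by
  have hpos := inv_diag_pos H hρ k
  rw [le_div_iff₀ hpos]
  have h1 := quad_inv_col H hρ k
  have h2 := mul_le_mul_of_nonneg_left (hH fun i => (regGram H ρ)⁻¹ i k) hρ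
  have h3 : Complex.normSq ((regGram H ρ)⁻¹ k k) ≤ sqNorm (fun i => (regGram H ρ)⁻¹ i k) :=
    Finset.single_le_sum (f := fun i => Complex.normSq ((regGram H ρ)⁻¹ i k))
      (fun _ _ => Complex.normSq_nonneg _) (Finset.mem_univ k)
  have h4 : ((regGram H ρ)⁻¹ k k).re ^ 2 ≤ Complex.normSq ((regGram H ρ)⁻¹ k k) := by
    rw [Complex.normSq_apply]; nlinarith [mul_self_nonneg ((regGram H ρ)⁻¹ k k).im]
  have h5 : (1 + ρ * s) * ((regGram H ρ)⁻¹ k k).re ^ 2 ≤ ((regGram H ρ)⁻¹ k k).re := by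
    have h6 : 0 ≤ ρ * s := mul_nonneg hρ hs
    nlinarith [mul_le_mul_of_nonneg_left (h4.trans h3) (by linarith : 0 ≤ 1 + ρ * s)]
  nlinarith

end Inverse

/-! ### Size of the zero-padded channel matrix -/

/-- The zero-padded channel matrix as a function of the real and imaginary parts of the taps. -/
def chan (ν Ld : ℕ) (ω : Fin (ν + 1) → ℝ × ℝ) : Matrix (Fin (Ld + ν)) (Fin Ld) ℂ :=
  HeqZP ν Ld (fun n => toC (ω n))

lemma chan_smul (ν Ld : ℕ) (r : ℝ) (ω : Fin (ν + 1) → ℝ × ℝ) :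
    chan ν Ld (r • ω) = (r : ℂ) • chan ν Ld ω := by
  ext p q
  simp only [chan, HeqZP, of_apply, Matrix.smul_apply]
  split_ifs
  · apply Complex.ext <;> simp [toC]
  · simp

lemma continuous_chan_mulVec (ν Ld : ℕ) :
    Continuous fun z : (Fin (ν + 1) → ℝ × ℝ) × (Fin Ld → ℂ) => chan ν Ld z.1 *ᵥ z.2 := by
  have htoC : Continuous toC := Complex.equivRealProdCLM.symm.continuous
  refine Continuous.matrix_mulVec (continuous_matrix fun p q => ?_) continuous_snd
  simp only [chan, HeqZP, of_apply]
  split_ifs <;> fun_prop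

/-- The channel matrix of a nonzero tap vector is injective: the product of the lowest nonzero
tap and the lowest nonzero symbol is a coordinate of the output. -/
lemma chan_mulVec_ne_zero (ν Ld : ℕ) {ω : Fin (ν + 1) → ℝ × ℝ} {x : Fin Ld → ℂ}
    (hω : ω ≠ 0) (hx : x ≠ 0) : chan ν Ld ω *ᵥ x ≠ 0 := by
  classical
  have h1 : (Finset.univ.filter fun i => ω i ≠ 0).Nonempty := by
    obtain ⟨i, hi⟩ := Function.ne_iff.mp hω
    exact ⟨i, by simpa using hi⟩
  have h2 : (Finset.univ.filter fun j => x j ≠ 0).Nonempty := by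
    obtain ⟨j, hj⟩ := Function.ne_iff.mp hx
    exact ⟨j, by simpa using hj⟩
  obtain ⟨i, hi, himin⟩ := Finset.exists_min_image _ id h1
  obtain ⟨j, hj, hjmin⟩ := Finset.exists_min_image _ id h2
  simp only [Finset.mem_filter, Finset.mem_univ, true_and, id] at hi hj himin hjmin
  intro h0
  have h := congrFun h0 ⟨(j : ℕ) + (i : ℕ), by omega⟩
  rw [mulVec, dotProduct, Finset.sum_eq_single j] at h
  · have hij : (j : ℕ) ≤ (j : ℕ) + i ∧ (j : ℕ) + i - j ≤ ν := by omega
    simp only [chan, HeqZP, of_apply, dif_pos hij, Pi.zero_apply, mul_eq_zero, hj, or_false] at h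
    have hidx : (⟨(j : ℕ) + i - j, by omega⟩ : Fin (ν + 1)) = i := by ext; simp
    rw [hidx] at h
    have hre := congrArg Complex.re h
    have him := congrArg Complex.im h
    exact hi (Prod.ext hre him)
  · intro q _ hq
    rcases lt_or_gt_of_ne hq with hlt | hgt
    · have : x q = 0 := by
        by_contra hne
        exact absurd (hjmin q hne) (not_le.mpr hlt)
      rw [this, mul_zero]
    · simp only [chan, HeqZP, of_apply]
      split_ifs with hpq
      · have hlt : (⟨(j : ℕ) + i - q, by omega⟩ : Fin (ν + 1)) < i := by
          rw [Fin.lt_def] at *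
          simp only
          omega
        have : ω ⟨(j : ℕ) + i - q, by omega⟩ = 0 := by
          by_contra hne
          exact absurd (himin _ hne) (not_le.mpr hlt)
        rw [this]
        simp [toC, Complex.ext_iff]
      · simp
  · simp

lemma norm_sq_le_sqNorm {n : Type*} [Fintype n] (y : n → ℂ) : ‖y‖ ^ 2 ≤ sqNorm y := by
  have h : ‖y‖ ≤ √(sqNorm y) := by
    rw [pi_norm_le_iff_of_nonneg (Real.sqrt_nonneg _)]
    intro i
    apply Real.le_sqrt_of_sq_le
    rw [← Complex.normSq_eq_norm_sq]
    exact Finset.single_le_sum (f := fun i => Complex.normSq (y i))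
      (fun _ _ => Complex.normSq_nonneg _) (Finset.mem_univ i)
  calc ‖y‖ ^ 2 ≤ √(sqNorm y) ^ 2 := by gcongr
    _ = sqNorm y := Real.sq_sqrt (sqNorm_nonneg y)

lemma sqNorm_le_norm_sq {n : Type*} [Fintype n] (y : n → ℂ) :
    sqNorm y ≤ Fintype.card n * ‖y‖ ^ 2 := by
  calc sqNorm y ≤ ∑ _i : n, ‖y‖ ^ 2 := by
        refine Finset.sum_le_sum fun i _ => ?_
        rw [Complex.normSq_eq_norm_sq]
        gcongr
        exact norm_le_pi_norm y i
    _ = _ := by simp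

/-- Uniform injectivity in sup norms, by compactness of the product of the unit spheres and
homogeneity in taps and symbols separately. -/
lemma exists_norm_chan_mulVec_ge (ν Ld : ℕ) (hLd : 1 ≤ Ld) :
    ∃ c > 0, ∀ (ω : Fin (ν + 1) → ℝ × ℝ) (x : Fin Ld → ℂ),
      c * ‖ω‖ * ‖x‖ ≤ ‖chan ν Ld ω *ᵥ x‖ := by
  have : Nonempty (Fin Ld) := ⟨⟨0, hLd⟩⟩
  have hK : IsCompact (Metric.sphere (0 : Fin (ν + 1) → ℝ × ℝ) 1 ×ˢ
      Metric.sphere (0 : Fin Ld → ℂ) 1) := (isCompact_sphere _ _).prod (isCompact_sphere _ _)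
  have hne : (Metric.sphere (0 : Fin (ν + 1) → ℝ × ℝ) 1 ×ˢ
      Metric.sphere (0 : Fin Ld → ℂ) 1).Nonempty :=
    (NormedSpace.sphere_nonempty.mpr zero_le_one).prod
      (NormedSpace.sphere_nonempty.mpr zero_le_one)
  obtain ⟨z, hz, hmin⟩ := hK.exists_isMinOn hne (continuous_chan_mulVec ν Ld).norm.continuousOn
  have hz1 : ‖z.1‖ = 1 := by simpa using hz.1
  have hz2 : ‖z.2‖ = 1 := by simpa using hz.2
  refine ⟨‖chan ν Ld z.1 *ᵥ z.2‖, norm_pos_iff.mpr (chan_mulVec_ne_zero ν Ld ?_ ?_), ?_⟩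
  · intro h; simp [h] at hz1
  · intro h; simp [h] at hz2
  intro ω x
  rcases eq_or_ne ω 0 with rfl | hω
  · simp
  rcases eq_or_ne x 0 with rfl | hx
  · simp
  have hω' := norm_pos_iff.mpr hω
  have hx' := norm_pos_iff.mpr hx
  have hmem : (‖ω‖⁻¹ • ω, ((‖x‖⁻¹ : ℝ) : ℂ) • x) ∈
      (Metric.sphere (0 : Fin (ν + 1) → ℝ × ℝ) 1 ×ˢ Metric.sphere (0 : Fin Ld → ℂ) 1) := by
    constructor
    · simp [norm_smul, hω'.ne']
    · simp [norm_smul, hx'.ne']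
  have h := isMinOn_iff.mp hmin _ hmem
  simp only [chan_smul, smul_mulVec, mulVec_smul, norm_smul, Complex.norm_real, norm_inv,
    norm_norm] at h
  calc ‖chan ν Ld z.1 *ᵥ z.2‖ * ‖ω‖ * ‖x‖
      ≤ (‖x‖⁻¹ * (‖ω‖⁻¹ * ‖chan ν Ld ω *ᵥ x‖)) * ‖ω‖ * ‖x‖ := by gcongr
    _ = ‖chan ν Ld ω *ᵥ x‖ := by field_simp

lemma exists_sqNorm_chan_mulVec_ge (ν Ld : ℕ) (hLd : 1 ≤ Ld) :
    ∃ c > 0, ∀ (ω : Fin (ν + 1) → ℝ × ℝ) (x : Fin Ld → ℂ),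
      (c * ‖ω‖ ^ 2) * sqNorm x ≤ sqNorm (chan ν Ld ω *ᵥ x) := by
  obtain ⟨c, hc, h⟩ := exists_norm_chan_mulVec_ge ν Ld hLd
  have hL : (0 : ℝ) < Ld := by exact_mod_cast hLd
  refine ⟨c ^ 2 / Ld, by positivity, fun ω x => ?_⟩
  have hx := sqNorm_le_norm_sq x
  rw [Fintype.card_fin] at hx
  calc (c ^ 2 / Ld * ‖ω‖ ^ 2) * sqNorm x ≤ (c ^ 2 / Ld * ‖ω‖ ^ 2) * (Ld * ‖x‖ ^ 2) := by gcongr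
    _ = (c * ‖ω‖ * ‖x‖) ^ 2 := by field_simp
    _ ≤ ‖chan ν Ld ω *ᵥ x‖ ^ 2 := by gcongr; exact h ω x
    _ ≤ _ := norm_sq_le_sqNorm _

lemma sqNorm_chan_col_le (ν Ld : ℕ) (ω : Fin (ν + 1) → ℝ × ℝ) (k : Fin Ld) :
    sqNorm (fun i => chan ν Ld ω i k) ≤ (2 * ((Ld : ℝ) + ν)) * ‖ω‖ ^ 2 := by
  have hent : ∀ i, Complex.normSq (chan ν Ld ω i k) ≤ 2 * ‖ω‖ ^ 2 := by
    intro i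
    simp only [chan, HeqZP, of_apply]
    split_ifs with h
    · have h1 := norm_le_pi_norm ω ⟨(i : ℕ) - k, by omega⟩
      have h2 := (norm_fst_le (ω ⟨(i : ℕ) - k, by omega⟩)).trans h1
      have h3 := (norm_snd_le (ω ⟨(i : ℕ) - k, by omega⟩)).trans h1
      rw [Real.norm_eq_abs] at h2 h3
      have h4 := sq_le_sq' (by linarith [abs_nonneg (ω ⟨(i : ℕ) - k, by omega⟩).1, norm_nonneg ω]) h2
      have h5 := sq_le_sq' (by linarith [abs_nonneg (ω ⟨(i : ℕ) - k, by omega⟩).2, norm_nonneg ω]) h3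
      rw [sq_abs] at h4 h5
      simp only [toC, Complex.normSq_mk]
      linarith
    · simp
  calc sqNorm (fun i => chan ν Ld ω i k) ≤ ∑ _i : Fin (Ld + ν), 2 * ‖ω‖ ^ 2 :=
        Finset.sum_le_sum fun i _ => hent i
    _ = _ := by simp; ring

/-! ### Gaussian measure of small balls -/

/-- The law `N(0, 1/2)` has a density bounded above everywhere and below near the origin, so a ball
of radius `r` has mass of exact order `r`. -/
lemma exists_gaussian_ball_bounds :
    ∃ c > 0, ∃ C > 0, ∀ r : ℝ, 0 < r → r ≤ 1 →
      c * r ≤ (gaussianReal 0 (1 / 2)).real (Metric.ball 0 r) ∧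
      (gaussianReal 0 (1 / 2)).real (Metric.ball 0 r) ≤ C * r := by
  set K : ℝ := (√(2 * Real.pi * ((1 / 2 : NNReal) : ℝ)))⁻¹ with hK
  have hKpos : 0 < K := by positivity
  refine ⟨2 * (K * Real.exp (-1)), by positivity, 2 * K, by positivity, fun r hr hr1 => ?_⟩
  have happ := gaussianReal_apply 0 (v := 1 / 2) (by norm_num) (Metric.ball (0 : ℝ) r)
  have hvol : volume (Metric.ball (0 : ℝ) r) = ENNReal.ofReal (2 * r) := Real.volume_ball 0 r
  have hlow : ENNReal.ofReal (2 * (K * Real.exp (-1)) * r) ≤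
      gaussianReal 0 (1 / 2) (Metric.ball 0 r) := by
    rw [happ]
    calc ENNReal.ofReal (2 * (K * Real.exp (-1)) * r)
        = ∫⁻ _x in Metric.ball (0 : ℝ) r, ENNReal.ofReal (K * Real.exp (-1)) := by
          rw [setLIntegral_const, hvol, ← ENNReal.ofReal_mul (by positivity)]
          congr 1; ring
      _ ≤ _ := by
          refine setLIntegral_mono' Metric.isOpen_ball.measurableSet fun x hx => ?_
          rw [gaussianPDF]
          apply ENNReal.ofReal_le_ofReal
          rw [gaussianPDFReal, ← hK]
          gcongr
          rw [Metric.mem_ball, dist_zero_right, Real.norm_eq_abs] at hx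
          norm_num
          exact hx.le.trans hr1
  have hup : gaussianReal 0 (1 / 2) (Metric.ball 0 r) ≤ ENNReal.ofReal (2 * K * r) := by
    rw [happ]
    calc _ ≤ ∫⁻ _x in Metric.ball (0 : ℝ) r, ENNReal.ofReal K := by
          refine setLIntegral_mono' Metric.isOpen_ball.measurableSet fun x hx => ?_
          rw [gaussianPDF]
          apply ENNReal.ofReal_le_ofReal
          rw [gaussianPDFReal, ← hK]
          apply mul_le_of_le_one_right hKpos.le
          rw [Real.exp_le_one_iff]
          have : (0 : ℝ) ≤ (x - 0) ^ 2 / (2 * ((1 / 2 : NNReal) : ℝ)) := by positivity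
          rw [neg_div]
          linarith
      _ = _ := by
          rw [setLIntegral_const, hvol, ← ENNReal.ofReal_mul (by positivity)]
          congr 1; ring
  constructor
  · rw [Measure.real, ← ENNReal.ofReal_le_iff_le_toReal (measure_ne_top _ _)]
    exact hlow
  · rw [Measure.real]
    exact ENNReal.toReal_le_of_le_ofReal (by positivity) hup

lemma matrixLaw_ball (N : ℕ) {r : ℝ} (hr : 0 < r) :
    (matrixLaw (Fin N)).real (Metric.ball 0 r) =
      ((gaussianReal 0 (1 / 2)).real (Metric.ball 0 r) ^ 2) ^ N := by
  have h : matrixLaw (Fin N) (Metric.ball 0 r) =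
      ((gaussianReal 0 (1 / 2)) (Metric.ball 0 r) ^ 2) ^ N := by
    rw [matrixLaw, ball_pi _ hr, Measure.pi_pi]
    have : entryLaw (Metric.ball (0 : ℝ × ℝ) r) =
        (gaussianReal 0 (1 / 2)) (Metric.ball 0 r) ^ 2 := by
      rw [show (0 : ℝ × ℝ) = (0, 0) from rfl, ← ball_prod_same, entryLaw, Measure.prod_prod, sq]
    simp [this]
  rw [Measure.real, h, ENNReal.toReal_pow, ENNReal.toReal_pow, Measure.real]

lemma tendsto_sqrt_div_atTop (a : ℝ) :
    Tendsto (fun ρ : ℝ => √(a / ρ)) atTop (nhds 0) := by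
  have : Tendsto (fun ρ : ℝ => a / ρ) atTop (nhds 0) := tendsto_const_nhds.div_atTop tendsto_id
  simpa using this.sqrt

/-- The mass of the ball of squared radius `a / ρ` is of exact order `ρ ^ (-N)`. -/
lemma exists_matrixLaw_ball_bounds (N : ℕ) {a : ℝ} (ha : 0 < a) :
    ∃ c > 0, ∃ C > 0, ∀ᶠ ρ : ℝ in atTop,
      c / ρ ^ N ≤ (matrixLaw (Fin N)).real (Metric.ball 0 √(a / ρ)) ∧
      (matrixLaw (Fin N)).real (Metric.ball 0 √(a / ρ)) ≤ C / ρ ^ N := by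
  obtain ⟨c, hc, C, hC, h⟩ := exists_gaussian_ball_bounds
  refine ⟨(c ^ 2 * a) ^ N, by positivity, (C ^ 2 * a) ^ N, by positivity, ?_⟩
  filter_upwards [eventually_gt_atTop 0,
    (tendsto_sqrt_div_atTop a).eventually_le_const zero_lt_one] with ρ hρ hr1
  have hr : 0 < √(a / ρ) := by positivity
  obtain ⟨h1, h2⟩ := h _ hr hr1
  have hsq : √(a / ρ) ^ 2 = a / ρ := Real.sq_sqrt (by positivity)
  rw [matrixLaw_ball N hr, ← div_pow, ← div_pow, mul_div_assoc, mul_div_assoc]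
  -- Only the two bounds are rewritten; the radii of the balls also contain `a / ρ`.
  nth_rewrite 1 [← hsq]
  nth_rewrite 4 [← hsq]
  rw [← mul_pow, ← mul_pow]
  exact ⟨by gcongr, by gcongr⟩

/-! ### From power-law bounds to the diversity -/

lemma tendsto_log_div_log {P : ℝ → ℝ} {N : ℕ} {c C : ℝ} (hc : 0 < c) (hC : 0 < C)
    (hlow : ∀ᶠ ρ in atTop, c / ρ ^ N ≤ P ρ) (hup : ∀ᶠ ρ in atTop, P ρ ≤ C / ρ ^ N) :
    Tendsto (fun ρ : ℝ => Real.log (P ρ) / Real.log ρ) atTop (nhds (-(N : ℝ))) := by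
  have hlim : ∀ b : ℝ, Tendsto (fun ρ : ℝ => Real.log b / Real.log ρ - N) atTop
      (nhds (-(N : ℝ))) := by
    intro b
    have : Tendsto (fun ρ : ℝ => Real.log b / Real.log ρ) atTop (nhds 0) :=
      tendsto_const_nhds.div_atTop Real.tendsto_log_atTop
    simpa using this.sub_const (N : ℝ)
  have hlog : ∀ b ρ : ℝ, 0 < b → 1 < ρ →
      Real.log (b / ρ ^ N) / Real.log ρ = Real.log b / Real.log ρ - N := by
    intro b ρ hb hρ
    have := Real.log_pos hρ
    rw [Real.log_div hb.ne' (by positivity), Real.log_pow]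
    field_simp
  refine tendsto_of_tendsto_of_tendsto_of_le_of_le' (hlim c) (hlim C) ?_ ?_
  · filter_upwards [hlow, eventually_gt_atTop 1] with ρ h hρ
    have := Real.log_pos hρ
    rw [← hlog c ρ hc hρ]
    gcongr
  · filter_upwards [hlow, hup, eventually_gt_atTop 1] with ρ h0 h hρ
    have := Real.log_pos hρ
    have hP : 0 < P ρ := lt_of_lt_of_le (by positivity) h0
    rw [← hlog C ρ hC hρ]
    gcongr

lemma one_add_sinrZP (ν Ld : ℕ) (ρ : ℝ) (ω : Fin (ν + 1) → ℝ × ℝ) (k : Fin Ld) :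
    1 + sinrZP ν Ld ρ ω k = 1 / ((regGram (chan ν Ld ω) ρ)⁻¹ k k).re := by
  unfold sinrZP regGram chan
  ring

instance (N : ℕ) : IsProbabilityMeasure (matrixLaw (Fin N)) := by
  unfold matrixLaw; infer_instance

lemma ball_le_PoutZP (ν Ld : ℕ) (hLd : 1 ≤ Ld) (R : ℝ) {ρ : ℝ} (hρ : 0 < ρ) :
    (matrixLaw (Fin (ν + 1))).real
      (Metric.ball 0 √((2 ^ R - 1) / (2 * ((Ld : ℝ) + ν)) / ρ)) ≤ PoutZP ν Ld R ρ := by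
  have : Nonempty (Fin Ld) := ⟨⟨0, hLd⟩⟩
  have hL : (0 : ℝ) < Ld := by exact_mod_cast hLd
  refine measureReal_mono fun ω hω => ?_
  rw [Metric.mem_ball, dist_zero_right, Real.lt_sqrt (norm_nonneg _), lt_div_iff₀ hρ,
    lt_div_iff₀ (by positivity)] at hω
  have hk : ∀ k ∈ Finset.univ, Real.logb 2 (1 + sinrZP ν Ld ρ ω k) < R := by
    intro k _
    have h1 := one_div_inv_diag_le (chan ν Ld ω) hρ.le k
    have h2 := mul_le_mul_of_nonneg_left (sqNorm_chan_col_le ν Ld ω k) hρ.le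
    rw [one_add_sinrZP, Real.logb_lt_iff_lt_rpow one_lt_two
      (one_div_pos.mpr (inv_diag_pos _ hρ.le k))]
    linarith
  have hsum := Finset.sum_lt_sum_of_nonempty Finset.univ_nonempty hk
  simp only [Finset.sum_const, Finset.card_univ, Fintype.card_fin, nsmul_eq_mul] at hsum
  simp only [Set.mem_ofPred_eq]
  rw [one_div, inv_mul_lt_iff₀ hL]
  exact hsum

lemma PoutZP_le_ball (ν Ld : ℕ) (hLd : 1 ≤ Ld) (R : ℝ) {ρ c : ℝ} (hρ : 0 < ρ) (hc : 0 < c)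
    (h : ∀ (ω : Fin (ν + 1) → ℝ × ℝ) (x : Fin Ld → ℂ),
      (c * ‖ω‖ ^ 2) * sqNorm x ≤ sqNorm (chan ν Ld ω *ᵥ x)) :
    PoutZP ν Ld R ρ ≤
      (matrixLaw (Fin (ν + 1))).real (Metric.ball 0 √((2 ^ R - 1) / c / ρ)) := by
  have hL : (0 : ℝ) < Ld := by exact_mod_cast hLd
  refine measureReal_mono fun ω hω => ?_
  simp only [Set.mem_ofPred_eq] at hω
  rw [one_div, inv_mul_lt_iff₀ hL] at hω
  rw [Metric.mem_ball, dist_zero_right, Real.lt_sqrt (norm_nonneg _), lt_div_iff₀ hρ,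
    lt_div_iff₀ hc]
  by_contra! hge
  refine absurd hω (not_lt.mpr ?_)
  have hk : ∀ k ∈ Finset.univ, R ≤ Real.logb 2 (1 + sinrZP ν Ld ρ ω k) := by
    intro k _
    have h1 := le_one_div_inv_diag (chan ν Ld ω) hρ.le (by positivity) (h ω) k
    rw [one_add_sinrZP, Real.le_logb_iff_rpow_le one_lt_two
      (one_div_pos.mpr (inv_diag_pos _ hρ.le k))]
    linarith
  have hsum := Finset.sum_le_sum hk
  simpa using hsum

/-- For a quasi-static single-antenna ISI channel with `ν+1` taps, the diversity of the
SC-MMSE receiver under zero-padded transmission equals `ν+1` irrespective of the rate: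
for every fixed `R > 0`, `lim_{ρ→∞} log P_out(ρ) / log ρ = −(ν+1)`. -/
theorem isi_zp_mmse_diversity (ν Ld : ℕ) (hLd : 1 ≤ Ld) (R : ℝ) (hR : 0 < R) :
    Tendsto (fun ρ : ℝ => Real.log (PoutZP ν Ld R ρ) / Real.log ρ) atTop
      (nhds (-((ν : ℝ) + 1))) := by
  have hL : (0 : ℝ) < Ld := by exact_mod_cast hLd
  have hpow : (0 : ℝ) < 2 ^ R - 1 := sub_pos.mpr (Real.one_lt_rpow one_lt_two hR)
  obtain ⟨c, hc, hchan⟩ := exists_sqNorm_chan_mulVec_ge ν Ld hLd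
  obtain ⟨c₁, hc₁, _, _, h₁⟩ := exists_matrixLaw_ball_bounds (ν + 1)
    (a := (2 ^ R - 1) / (2 * ((Ld : ℝ) + ν))) (by positivity)
  obtain ⟨_, _, C₂, hC₂, h₂⟩ := exists_matrixLaw_ball_bounds (ν + 1)
    (a := (2 ^ R - 1) / c) (by positivity)
  have key := tendsto_log_div_log (P := PoutZP ν Ld R) (N := ν + 1) hc₁ hC₂ ?_ ?_
  · simpa using key
  · filter_upwards [h₁, eventually_gt_atTop 0] with ρ h hρ
    exact h.1.trans (ball_le_PoutZP ν Ld hLd R hρ)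
  · filter_upwards [h₂, eventually_gt_atTop 0] with ρ h hρ
    exact (PoutZP_le_ball ν Ld hLd R hρ hc hchan).trans h.2

end
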